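/- arXiv:2504.21175 — 2 statements merged into one kernel-verified Lean document; each statement's English description precedes it below -/
import Mathlib

section
/- (Deterministic core of the lemma on approximation between consecutive smooth-histogram timestamps.) Let p ∈ [1,2], ε ∈ (0,1), and let u be a stream of length m. Let i, n, t₁, t₂, t be integers with 1 ≤ t₁ < i−n ≤ t₂ ≤ t ≤ i ≤ m, and write W = [i−n, i]. Let f be an interval estimator satisfying: (i) for all integers a,b with 1 ≤ a < i−n ≤ b ≤ i, |f^{(a,b)} − ℓ_p^{(a,b)}| ≤ (ε^p/32)·ℓ_p^{(a,b)} + (ε^p/64)·ℓ_p^{W}; and (ii) for all [a,b] ⊆ W, |f^{(a,b)} − ℓ_p^{(a,b)}| ≤ (ε^p/32)·ℓ_p^{W}. If f^{(t₂,t)} ≥ (1 − ε^p/32)·f^{(t₁,t)}, then ℓ_p^{(t₂,i)} ≥ (1 − ε/2)·ℓ_p^{(t₁,i)}. -/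
/-!
Write `x` for the frequency vector of `[t₁, t₂ - 1]`, and put `A = ℓ_p^{(t₁,t)}`, `B = ℓ_p^{(t₂,t)}`,
`X = ℓ_p^{(t₁,i)}`, `Y = ℓ_p^{(t₂,i)}`, `L = ℓ_p^W`, `e = ε^p`.

* The guarantees on `f`, with `A ≤ X` and `L ≤ X`, turn the hypothesis on `f` into
  `A - B ≤ (7/64) e X`.
* For `p ≥ 1`, `r ↦ r^p` is superadditive on nonnegative reals, so `‖x‖_p^p ≤ A^p - B^p`
  (`Fmom_superadd`). Bernoulli's inequality gives `A^p - B^p ≤ p A^{p-1} (A - B)`, and with `p ≤ 2`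
  this is at most `(7/32) e X^p`.
* Since `p ≤ 2`, `(ε/2)^p ≥ e/4`; hence `‖x‖_p ≤ (ε/2) X`.
* Minkowski's inequality (`lpnorm_triangle`) gives `X ≤ ‖x‖_p + Y`, which is the claim.
-/

/-- `freq u a b i` is the number of times universe item `i` occurs among the
stream elements `u a, …, u b` (the frequency vector entry `x^{(a,b)}_i`). -/
def freq (u : ℕ → ℕ) (a b i : ℕ) : ℕ :=
  ((Finset.Icc a b).filter (fun t => u t = i)).card

/-- `Fmom U u p a b = F_p^{(a,b)} = Σ_{i=1}^U (x^{(a,b)}_i)^p`. -/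
noncomputable def Fmom (U : ℕ) (u : ℕ → ℕ) (p : ℝ) (a b : ℕ) : ℝ :=
  ∑ i ∈ Finset.Icc 1 U, (freq u a b i : ℝ) ^ p

/-- `lpnorm U u p a b = ℓ_p^{(a,b)} = (F_p^{(a,b)})^{1/p}`. -/
noncomputable def lpnorm (U : ℕ) (u : ℕ → ℕ) (p : ℝ) (a b : ℕ) : ℝ :=
  (Fmom U u p a b) ^ (1 / p)

lemma freq_split (u : ℕ → ℕ) {a b c : ℕ} (hab : a < b) (hbc : b ≤ c) (j : ℕ) :
    freq u a c j = freq u a (b - 1) j + freq u b c j := by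
  unfold freq
  rw [← Finset.card_union_of_disjoint]
  · congr 1
    ext s
    simp only [Finset.mem_filter, Finset.mem_Icc, Finset.mem_union]
    grind
  · rw [Finset.disjoint_left]
    intro s
    simp only [Finset.mem_filter, Finset.mem_Icc]
    grind

lemma freq_mono (u : ℕ → ℕ) {a b c d : ℕ} (hca : c ≤ a) (hbd : b ≤ d) (j : ℕ) :
    freq u a b j ≤ freq u c d j :=
  Finset.card_le_card (Finset.filter_subset_filter _ (Finset.Icc_subset_Icc hca hbd))

lemma Fmom_nonneg (U : ℕ) (u : ℕ → ℕ) (p : ℝ) (a b : ℕ) : 0 ≤ Fmom U u p a b :=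
  Finset.sum_nonneg fun _ _ => by positivity

lemma lpnorm_nonneg (U : ℕ) (u : ℕ → ℕ) (p : ℝ) (a b : ℕ) : 0 ≤ lpnorm U u p a b :=
  Real.rpow_nonneg (Fmom_nonneg U u p a b) _

lemma lpnorm_rpow (U : ℕ) (u : ℕ → ℕ) {p : ℝ} (hp : 1 ≤ p) (a b : ℕ) :
    lpnorm U u p a b ^ p = Fmom U u p a b := by
  unfold lpnorm
  rw [← Real.rpow_mul (Fmom_nonneg U u p a b), one_div_mul_cancel (by linarith), Real.rpow_one]

lemma lpnorm_mono (U : ℕ) (u : ℕ → ℕ) {p : ℝ} (hp : 1 ≤ p) {a b c d : ℕ}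
    (hca : c ≤ a) (hbd : b ≤ d) : lpnorm U u p a b ≤ lpnorm U u p c d := by
  refine Real.rpow_le_rpow (Fmom_nonneg U u p a b) ?_ (by positivity)
  refine Finset.sum_le_sum fun j _ => ?_
  have h := freq_mono u hca hbd j
  exact Real.rpow_le_rpow (by positivity) (by exact_mod_cast h) (by linarith)

lemma Fmom_superadd (U : ℕ) (u : ℕ → ℕ) {p : ℝ} (hp : 1 ≤ p) {a b c : ℕ}
    (hab : a < b) (hbc : b ≤ c) :
    Fmom U u p a (b - 1) + Fmom U u p b c ≤ Fmom U u p a c := by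
  unfold Fmom
  rw [← Finset.sum_add_distrib]
  refine Finset.sum_le_sum fun j _ => ?_
  rw [freq_split u hab hbc j, Nat.cast_add]
  exact Real.add_rpow_le_rpow_add (by positivity) (by positivity) hp

lemma lpnorm_triangle (U : ℕ) (u : ℕ → ℕ) {p : ℝ} (hp : 1 ≤ p) {a b c : ℕ}
    (hab : a < b) (hbc : b ≤ c) :
    lpnorm U u p a c ≤ lpnorm U u p a (b - 1) + lpnorm U u p b c := by
  have h := Real.Lp_add_le_of_nonneg (Finset.Icc 1 U)
    (f := fun j => (freq u a (b - 1) j : ℝ)) (g := fun j => (freq u b c j : ℝ)) hp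
    (fun _ _ => by positivity) (fun _ _ => by positivity)
  simpa only [lpnorm, Fmom, freq_split u hab hbc, Nat.cast_add] using h

/-- A consequence of Bernoulli's inequality: `A^p - B^p ≤ p A^{p-1} (A - B)`, with `p` and `A`
on the right replaced by the upper bounds `2` and `X`, and `A - B` by `δ X`. -/
lemma rpow_sub_rpow_le {p A B X δ : ℝ} (hp1 : 1 ≤ p) (hp2 : p ≤ 2) (hA : 0 ≤ A) (hB : 0 ≤ B)
    (hAX : A ≤ X) (hδ : 0 ≤ δ) (h : A - B ≤ δ * X) :
    A ^ p - B ^ p ≤ 2 * δ * X ^ p := by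
  have hX : 0 ≤ X := hA.trans hAX
  rcases hA.eq_or_lt with rfl | hA
  · have h1 : 0 ≤ B ^ p := Real.rpow_nonneg hB p
    have h2 : 0 ≤ 2 * δ * X ^ p := by positivity
    rw [Real.zero_rpow (by linarith)]
    linarith
  · have hX' : 0 < X := hA.trans_le hAX
    have hb := one_add_mul_self_le_rpow_one_add (s := B / A - 1)
      (by have : 0 ≤ B / A := by positivity
          linarith) hp1
    rw [add_sub_cancel, Real.div_rpow hB hA.le, le_div_iff₀ (by positivity)] at hb
    have hApow : A ^ p = A ^ (p - 1) * A := by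
      rw [← Real.rpow_add_one hA.ne', sub_add_cancel]
    have hXpow : X ^ p = X ^ (p - 1) * X := by
      rw [← Real.rpow_add_one hX'.ne', sub_add_cancel]
    have hmono : A ^ (p - 1) ≤ X ^ (p - 1) := Real.rpow_le_rpow hA.le hAX (by linarith)
    have hkey : A ^ p - B ^ p ≤ p * A ^ (p - 1) * (A - B) := by
      have : (1 + p * (B / A - 1)) * A ^ p = A ^ p - p * A ^ (p - 1) * (A - B) := by
        rw [hApow]
        field_simp
        ring
      linarith
    calc A ^ p - B ^ p ≤ p * A ^ (p - 1) * (A - B) := hkey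
      _ ≤ p * A ^ (p - 1) * (δ * X) := by gcongr
      _ ≤ 2 * X ^ (p - 1) * (δ * X) := by gcongr
      _ = 2 * δ * X ^ p := by rw [hXpow]; ring

/-- Deterministic core of the lemma on approximation between consecutive
smooth-histogram timestamps: if a Strong-Estimator-type interval estimator `f`
reports that the suffix starting at `t₂` is almost as large as the one starting
at `t₁`, then `ℓ_p^{(t₂,i)} ≥ (1 - ε/2)·ℓ_p^{(t₁,i)}`. -/
theorem consecutive_timestamp_approx
    (m U : ℕ) (u : ℕ → ℕ) (hu : ∀ t ∈ Finset.Icc 1 m, u t ∈ Finset.Icc 1 U)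
    (p : ℝ) (hp1 : 1 ≤ p) (hp2 : p ≤ 2)
    (ε : ℝ) (hε : ε ∈ Set.Ioo (0 : ℝ) 1)
    (i n t₁ t₂ t : ℕ)
    (ht₁ : 1 ≤ t₁) (ht₁' : t₁ < i - n) (ht₂ : i - n ≤ t₂) (ht₂' : t₂ ≤ t)
    (ht : t ≤ i) (him : i ≤ m)
    (f : ℕ → ℕ → ℝ)
    (hf_cross : ∀ a b : ℕ, 1 ≤ a → a < i - n → i - n ≤ b → b ≤ i →
      |f a b - lpnorm U u p a b| ≤
        ε ^ p / 32 * lpnorm U u p a b + ε ^ p / 64 * lpnorm U u p (i - n) i)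
    (hf_in : ∀ a b : ℕ, i - n ≤ a → a ≤ b → b ≤ i →
      |f a b - lpnorm U u p a b| ≤ ε ^ p / 32 * lpnorm U u p (i - n) i)
    (hff : (1 - ε ^ p / 32) * f t₁ t ≤ f t₂ t) :
    (1 - ε / 2) * lpnorm U u p t₁ i ≤ lpnorm U u p t₂ i := by
  obtain ⟨hε0, hε1⟩ := hε
  have he0 : 0 < ε ^ p := Real.rpow_pos_of_pos hε0 p
  have he1 : ε ^ p ≤ 1 := Real.rpow_le_one hε0.le hε1.le (by linarith)
  have hlt : t₁ < t₂ := by omega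
  have hA := lpnorm_nonneg U u p t₁ t
  have hB := lpnorm_nonneg U u p t₂ t
  have hL := lpnorm_nonneg U u p (i - n) i
  have hX := lpnorm_nonneg U u p t₁ i
  have hAX : lpnorm U u p t₁ t ≤ lpnorm U u p t₁ i := lpnorm_mono U u hp1 le_rfl ht
  have hLX : lpnorm U u p (i - n) i ≤ lpnorm U u p t₁ i := lpnorm_mono U u hp1 ht₁'.le le_rfl
  have h1 := (abs_le.1 (hf_cross t₁ t ht₁ ht₁' (by omega) ht)).1
  have h2 := (abs_le.1 (hf_in t₂ t ht₂ ht₂' ht)).2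
  have htri := lpnorm_triangle U u hp1 hlt (ht₂'.trans ht)
  have hsup := Fmom_superadd U u hp1 hlt ht₂'
  rw [← lpnorm_rpow U u hp1, ← lpnorm_rpow U u hp1, ← lpnorm_rpow U u hp1] at hsup
  have hx := lpnorm_nonneg U u p t₁ (t₂ - 1)
  generalize lpnorm U u p t₁ t = A at *
  generalize lpnorm U u p t₂ t = B at *
  generalize lpnorm U u p (i - n) i = L at *
  generalize lpnorm U u p t₁ i = X at *
  generalize lpnorm U u p t₁ (t₂ - 1) = x at *
  have hdiff : A - B ≤ 7 / 64 * ε ^ p * X := by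
    have h3 : (1 - ε ^ p / 32) * ((1 - ε ^ p / 32) * A - ε ^ p / 64 * L)
        ≤ (1 - ε ^ p / 32) * f t₁ t :=
      mul_le_mul_of_nonneg_left (by linarith) (by linarith)
    have h4 : 0 ≤ (ε ^ p) ^ 2 * A := by positivity
    have h5 : 0 ≤ (ε ^ p) ^ 2 * L := by positivity
    have h6 : ε ^ p * A ≤ ε ^ p * X := by gcongr
    have h7 : ε ^ p * L ≤ ε ^ p * X := by gcongr
    nlinarith
  have hpow := rpow_sub_rpow_le hp1 hp2 hA hB hAX (by positivity) hdiff
  have hhalf : ε ^ p / 4 ≤ (ε / 2) ^ p := by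
    rw [Real.div_rpow hε0.le (by norm_num)]
    have h2p : (2 : ℝ) ^ p ≤ 4 := by
      calc (2 : ℝ) ^ p ≤ 2 ^ (2 : ℝ) := Real.rpow_le_rpow_of_exponent_le (by norm_num) hp2
        _ = 4 := by norm_num
    gcongr
  have hxX : x ≤ ε / 2 * X := by
    rw [← Real.rpow_le_rpow_iff hx (by positivity) (by linarith : 0 < p),
      Real.mul_rpow (by positivity) hX]
    have hXp : 0 ≤ X ^ p := by positivity
    have h8 : ε ^ p / 4 * X ^ p ≤ (ε / 2) ^ p * X ^ p := by gcongr
    have h9 : 0 ≤ ε ^ p * X ^ p := by positivity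
    linarith
  linarith
end

section
/- (Product perturbation bound supporting the rounding of difference estimators.) Let s ∈ (0,1] be real, let Λ > 0, let 0 ≤ δ ≤ Λ, and let x₁, x₂, x₃ ∈ [0, Λ]. Then (x₁+δ)^s · (x₂+δ)^s · (x₃+δ)^s ≤ (x₁·x₂·x₃)^s + 7·(Λ²·δ)^s. -/
/-! Since `0 < s ≤ 1`, the map `t ↦ t ^ s` is subadditive on `[0, ∞)`, so each factor is at most
`xᵢ ^ s + δ ^ s`. Expanding the product of these three sums leaves the main term
`(x₁ x₂ x₃) ^ s` and seven mixed terms; each mixed term contains a factor `δ ^ s`, and its other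
two factors are at most `Λ ^ s`, so it is at most `(Λ² δ) ^ s`. -/

/-- Product perturbation bound supporting the rounding of difference
estimators: for `s ∈ (0,1]`, `0 ≤ δ ≤ Λ` and `x₁, x₂, x₃ ∈ [0, Λ]`,
`(x₁+δ)^s·(x₂+δ)^s·(x₃+δ)^s ≤ (x₁·x₂·x₃)^s + 7·(Λ²·δ)^s`. -/
theorem product_perturbation_bound
    (s Λ δ x₁ x₂ x₃ : ℝ)
    (hs0 : 0 < s) (hs1 : s ≤ 1)
    (hΛ : 0 < Λ) (hδ0 : 0 ≤ δ) (hδΛ : δ ≤ Λ)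
    (hx₁ : x₁ ∈ Set.Icc (0 : ℝ) Λ) (hx₂ : x₂ ∈ Set.Icc (0 : ℝ) Λ)
    (hx₃ : x₃ ∈ Set.Icc (0 : ℝ) Λ) :
    (x₁ + δ) ^ s * (x₂ + δ) ^ s * (x₃ + δ) ^ s ≤
      (x₁ * x₂ * x₃) ^ s + 7 * (Λ ^ (2 : ℕ) * δ) ^ s := by
  obtain ⟨h1, h1'⟩ := hx₁
  obtain ⟨h2, h2'⟩ := hx₂
  obtain ⟨h3, h3'⟩ := hx₃
  have sub (x : ℝ) (hx : 0 ≤ x) : (x + δ) ^ s ≤ x ^ s + δ ^ s :=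
    Real.rpow_add_le_add_rpow hx hδ0 hs0.le hs1
  have mono (x : ℝ) (hx : 0 ≤ x) (hxΛ : x ≤ Λ) : x ^ s ≤ Λ ^ s :=
    Real.rpow_le_rpow hx hxΛ hs0.le
  rw [Real.mul_rpow (mul_nonneg h1 h2) h3, Real.mul_rpow h1 h2,
    Real.mul_rpow (by positivity) hδ0, pow_two, Real.mul_rpow hΛ.le hΛ.le]
  have key : (x₁ + δ) ^ s * (x₂ + δ) ^ s * (x₃ + δ) ^ s ≤
      (x₁ ^ s + δ ^ s) * (x₂ ^ s + δ ^ s) * (x₃ ^ s + δ ^ s) := by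
    gcongr
    exacts [sub x₁ h1, sub x₂ h2, sub x₃ h3]
  have a0 := Real.rpow_nonneg h1 s
  have b0 := Real.rpow_nonneg h2 s
  have c0 := Real.rpow_nonneg h3 s
  have d0 := Real.rpow_nonneg hδ0 s
  have aL := mono x₁ h1 h1'
  have bL := mono x₂ h2 h2'
  have cL := mono x₃ h3 h3'
  have dL := mono δ hδ0 hδΛ
  have mixed (u v : ℝ) (hv0 : 0 ≤ v) (hu : u ≤ Λ ^ s) (hv : v ≤ Λ ^ s) :
      u * v * δ ^ s ≤ Λ ^ s * Λ ^ s * δ ^ s := by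
    gcongr
  linarith [mixed _ _ b0 aL bL, mixed _ _ c0 aL cL, mixed _ _ c0 bL cL,
    mixed _ _ d0 aL dL, mixed _ _ d0 bL dL, mixed _ _ d0 cL dL, mixed _ _ d0 dL dL]
end
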